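/- Let n ≥ 1, let A ∈ ℂ^{n×n} be positive-imaginary with canonical phases φ₁(A) ≥ ⋯ ≥ φₙ(A) ≥ 0, let 0 ≤ r ≤ n, and let E ∈ ℂ^{n×n} be any sectorial matrix with prank(E) ≤ r such that E⁻¹AE⁻¹ is positive-imaginary. Then for every m ∈ {1,…,n}, the sum of the m largest canonical phases of E⁻¹AE⁻¹ is at least Σ_{k=r+1}^{min(n,r+m)} φ_k(A). -/

import Mathlib

noncomputable section

open Matrix
open scoped Classical ComplexOrder

namespace LowPrank

variable {n : ℕ}

/-- A matrix is sectorial if its numerical range does not contain `0`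
(`star x ⬝ᵥ x = 1` encodes `‖x‖₂ = 1`). -/
def IsSectorial (A : Matrix (Fin n) (Fin n) ℂ) : Prop :=
  ∀ x : Fin n → ℂ, star x ⬝ᵥ x = 1 → star x ⬝ᵥ A.mulVec x ≠ 0

/-- The diagonal unitary matrix `diag (e^{iφ₁}, …, e^{iφₙ})`. -/
def phaseDiag (φ : Fin n → ℝ) : Matrix (Fin n) (Fin n) ℂ :=
  Matrix.diagonal fun k => Complex.exp (Complex.I * (φ k : ℂ))

/-- `A = Tᴴ diag (e^{iφ₁}, …, e^{iφₙ}) T` with `T` invertible. -/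
def IsSectorialDecomp (A T : Matrix (Fin n) (Fin n) ℂ) (φ : Fin n → ℝ) : Prop :=
  IsUnit T ∧ A = Tᴴ * phaseDiag φ * T

/-- `φ` is the (sorted, normalized) vector of canonical phases of `A`:
nonincreasing, spread `< π`, midpoint of the range in `(-π, π]`, and realizing a
sectorial decomposition of `A`. -/
def IsCanonicalPhases (A : Matrix (Fin n) (Fin n) ℂ) (φ : Fin n → ℝ) : Prop :=
  Antitone φ ∧ (∀ i j, φ i - φ j < Real.pi) ∧
    (-Real.pi < ((⨆ i, φ i) + ⨅ i, φ i) / 2) ∧ (((⨆ i, φ i) + ⨅ i, φ i) / 2 ≤ Real.pi) ∧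
    ∃ T, IsSectorialDecomp A T φ

/-- The canonical phases `φ₁(A) ≥ ⋯ ≥ φₙ(A)` of a sectorial matrix
(`phases A k` is the `(k+1)`-st largest canonical phase). -/
noncomputable def phases (A : Matrix (Fin n) (Fin n) ℂ) : Fin n → ℝ :=
  if h : ∃ φ, IsCanonicalPhases A φ then h.choose else 0

/-- The phase-rank: the number of nonzero canonical phases. -/
noncomputable def prank (A : Matrix (Fin n) (Fin n) ℂ) : ℕ :=
  {k : Fin n | phases A k ≠ 0}.ncard

/-- Positive-imaginary: sectorial with all canonical phases in `[0, π)`. -/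
def PositiveImaginary (A : Matrix (Fin n) (Fin n) ℂ) : Prop :=
  IsSectorial A ∧ ∀ k, phases A k ∈ Set.Ico 0 Real.pi

/-- Symmetric gauge function. -/
structure IsSymmetricGauge (Φ : (Fin n → ℝ) → ℝ) : Prop where
  pos : ∀ x, x ≠ 0 → 0 < Φ x
  smul : ∀ (ρ : ℝ) (x), Φ (ρ • x) = |ρ| * Φ x
  subadd : ∀ x y, Φ (x + y) ≤ Φ x + Φ y
  perm : ∀ (σ : Equiv.Perm (Fin n)) (x), Φ (x ∘ σ) = Φ x
  abs : ∀ x, Φ (fun k => |x k|) = Φ x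

/-- The set `S_p(A, r)` of `r`-half-truncations of `A`. -/
def Sp (A : Matrix (Fin n) (Fin n) ℂ) (r : ℕ) : Set (Matrix (Fin n) (Fin n) ℂ) :=
  {E | ∃ T, IsSectorialDecomp A T (phases A) ∧
    E = Tᴴ * Matrix.diagonal (fun k : Fin n =>
      if (k : ℕ) < r then Complex.exp (Complex.I * ((phases A k / 2 : ℝ) : ℂ)) else 1) * T}

/-!
If `Eᴴx = Ex`, then the quadratic form of `E⁻¹AE⁻¹` at `Ex` equals that of `A` at `x`. Since
`E = Tᴴ diag(e^{iφ}) T`, the rank of `E - Eᴴ` is at most the number of nonzero phases of `E`, so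
such `x` form a subspace `V` of codimension at most `r`. In a sectorial decomposition,
`Im (e^{-iθ} x*Ax) = ∑ₖ sin (φₖ - θ) |(Tx)ₖ|²`: it is positive when only phases in `(θ, θ + π)`
contribute and nonpositive when only phases in `[θ - π, θ]` do. Taking for `θ` the `j`-th phase of
`E⁻¹AE⁻¹`, a dimension count on `V` gives `φ_{j+r}(A) ≤ φ_j(E⁻¹AE⁻¹)`, and these inequalities are
summed.

That canonical phases exist is seen as follows: by the Toeplitz–Hausdorff theorem, `0` can be
separated from the numerical range, so that some `cA` has positive definite real part, and the real
and imaginary parts of `cA` are simultaneously diagonalizable by a congruence.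
-/

section NumericalRange

open Complex
open scoped ComplexConjugate InnerProductSpace

variable {E : Type*} [NormedAddCommGroup E] [InnerProductSpace ℂ E]

/-- The numerical range of an operator on a complex inner product space: the values of its
quadratic form on the unit sphere. -/
def numericalRange (T : E →ₗ[ℂ] E) : Set ℂ :=
  (fun x => ⟪x, T x⟫_ℂ) '' Metric.sphere 0 1

lemma mem_numericalRange_iff {T : E →ₗ[ℂ] E} {w : ℂ} :
    w ∈ numericalRange T ↔ ∃ x ≠ 0, ⟪x, T x⟫_ℂ = w * ‖x‖ ^ 2 := by
  constructor
  · rintro ⟨x, hx, rfl⟩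
    have hx : ‖x‖ = 1 := by simpa using hx
    exact ⟨x, norm_ne_zero_iff.mp (by simp [hx]), by simp [hx]⟩
  · rintro ⟨x, hx, hw⟩
    have hx' : (‖x‖ : ℂ) ≠ 0 := by simpa using hx
    refine ⟨(‖x‖ : ℂ)⁻¹ • x, by simpa using norm_smul_inv_norm (𝕜 := ℂ) hx, ?_⟩
    simp only [map_smul, inner_smul_left, inner_smul_right, hw, map_inv₀, conj_ofReal]
    field_simp

lemma exists_norm_eq_one_im_eq_zero (p q : ℂ) :
    ∃ u : ℂ, ‖u‖ = 1 ∧ (u * p + conj u * q).im = 0 := by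
  obtain ⟨u, hu, hg⟩ := Complex.exists_norm_eq_mul_self (p - conj q)
  refine ⟨u, hu, ?_⟩
  calc (u * p + conj u * q).im = (u * (p - conj q)).im := by
        simp only [add_im, mul_im, sub_re, sub_im, conj_re, conj_im]; ring
    _ = 0 := by rw [← hg, ofReal_im]

-- The vector is `α • x + u • y`: the unimodular `u` makes the cross terms a real multiple of
-- `⟪x, T x⟫`, which leaves a real quadratic equation for `α`.
lemma exists_ne_zero_inner_map_self_eq_zero (T : E →ₗ[ℂ] E) {x y : E} (hx : x ≠ 0) {t : ℝ}
    (ht : 0 < t) (hy : ⟪y, T y⟫_ℂ = -t * ⟪x, T x⟫_ℂ) : ∃ z ≠ 0, ⟪z, T z⟫_ℂ = 0 := by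
  by_cases hp : ⟪x, T x⟫_ℂ = 0
  · exact ⟨x, hx, hp⟩
  obtain ⟨u, hu, him⟩ :=
    exists_norm_eq_one_im_eq_zero (⟪x, T y⟫_ℂ / ⟪x, T x⟫_ℂ) (⟪y, T x⟫_ℂ / ⟪x, T x⟫_ℂ)
  have huu : conj u * u = 1 := by rw [conj_mul', hu]; simp
  obtain ⟨s, hs⟩ : ∃ s : ℝ, u * ⟪x, T y⟫_ℂ + conj u * ⟪y, T x⟫_ℂ = s * ⟪x, T x⟫_ℂ := by
    refine ⟨_, (div_eq_iff hp).mp (.trans ?_ (conj_eq_iff_re.mp (conj_eq_iff_im.mpr him)).symm)⟩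
    ring
  obtain ⟨α, hα⟩ : ∃ α : ℝ, α ^ 2 + s * α - t = 0 := by
    refine ⟨(-s + √(s ^ 2 + 4 * t)) / 2, ?_⟩
    linear_combination Real.sq_sqrt (show 0 ≤ s ^ 2 + 4 * t by positivity) / 4
  have hα : (α : ℂ) ^ 2 + s * α - t = 0 := mod_cast hα
  refine ⟨(α : ℂ) • x + u • y, fun hz => ?_, ?_⟩
  · have huy : u • y = -((α : ℂ) • x) := eq_neg_of_add_eq_zero_right hz
    have hquad : ⟪u • y, T (u • y)⟫_ℂ = ⟪(α : ℂ) • x, T ((α : ℂ) • x)⟫_ℂ := by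
      rw [huy, map_neg, inner_neg_neg]
    simp only [map_smul, inner_smul_left, inner_smul_right, conj_ofReal, hy] at hquad
    have hzero : ((t + α ^ 2 : ℝ) : ℂ) * ⟪x, T x⟫_ℂ = 0 := by
      push_cast
      linear_combination -hquad - t * ⟪x, T x⟫_ℂ * huu
    have hpos : t + α ^ 2 ≠ 0 := by positivity
    exact mul_ne_zero (ofReal_ne_zero.mpr hpos) hp hzero
  · simp only [map_add, map_smul, inner_add_left, inner_add_right, inner_smul_left,
      inner_smul_right, conj_ofReal, hy]
    linear_combination α * hs + ⟪x, T x⟫_ℂ * hα - t * ⟪x, T x⟫_ℂ * huu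

/-- The **Toeplitz–Hausdorff theorem**. -/
theorem convex_numericalRange (T : E →ₗ[ℂ] E) : Convex ℝ (numericalRange T) := by
  rw [convex_iff_forall_pos]
  rintro _ ⟨x, hx, rfl⟩ _ ⟨y, hy, rfl⟩ a b ha hb hab
  have hx : ‖x‖ = 1 := by simpa using hx
  have hy : ‖y‖ = 1 := by simpa using hy
  set w : ℂ := a • ⟪x, T x⟫_ℂ + b • ⟪y, T y⟫_ℂ with hw
  have hshift (z : E) : ⟪z, (T - w • (LinearMap.id : E →ₗ[ℂ] E)) z⟫_ℂ =
      ⟪z, T z⟫_ℂ - w * ‖z‖ ^ 2 := by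
    rw [LinearMap.sub_apply, LinearMap.smul_apply, LinearMap.id_apply, inner_sub_right,
      inner_smul_right, inner_self_eq_norm_sq_to_K]
    rfl
  obtain ⟨z, hz, hz0⟩ := exists_ne_zero_inner_map_self_eq_zero (T - w • LinearMap.id)
    (x := x) (y := y) (norm_ne_zero_iff.mp (by simp [hx])) (div_pos ha hb) (by
      have hb' : (b : ℂ) ≠ 0 := mod_cast hb.ne'
      have hab' : (a + b : ℂ) = 1 := mod_cast hab
      rw [hshift, hshift, hx, hy]
      simp only [real_smul] at hw
      push_cast
      field_simp
      linear_combination -hw - w * hab')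
  exact mem_numericalRange_iff.mpr ⟨z, hz, sub_eq_zero.mp ((hshift z).symm.trans hz0)⟩

lemma isCompact_numericalRange [FiniteDimensional ℂ E] (T : E →ₗ[ℂ] E) :
    IsCompact (numericalRange T) := by
  have := FiniteDimensional.proper ℂ E
  have hT : Continuous T := T.continuous_of_finiteDimensional
  exact (isCompact_sphere 0 1).image (by fun_prop)

lemma exists_forall_re_mul_pos {s : Set ℂ} (hconv : Convex ℝ s) (hclosed : IsClosed s)
    (h0 : 0 ∉ s) : ∃ c : ℂ, ∀ w ∈ s, 0 < (c * w).re := by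
  obtain ⟨f, u, hu, hf⟩ := geometric_hahn_banach_point_closed hconv hclosed h0
  refine ⟨conj ((InnerProductSpace.toDual ℝ ℂ).symm f), fun w hw => ?_⟩
  rw [mul_comm, ← Complex.inner, InnerProductSpace.toDual_symm_apply]
  exact (map_zero f ▸ hu).trans (hf w hw)

lemma exists_forall_re_mul_inner_pos [FiniteDimensional ℂ E] {T : E →ₗ[ℂ] E}
    (hT : 0 ∉ numericalRange T) : ∃ c : ℂ, ∀ x ≠ 0, 0 < (c * ⟪x, T x⟫_ℂ).re := by
  obtain ⟨c, hc⟩ := exists_forall_re_mul_pos (convex_numericalRange T)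
    (isCompact_numericalRange T).isClosed hT
  refine ⟨c, fun x hx => ?_⟩
  have hx' : (‖x‖ : ℂ) ≠ 0 := by simpa using hx
  have hmem : ⟪x, T x⟫_ℂ / ‖x‖ ^ 2 ∈ numericalRange T :=
    mem_numericalRange_iff.mpr ⟨x, hx, by field_simp⟩
  have hscale : c * ⟪x, T x⟫_ℂ = (‖x‖ ^ 2 : ℝ) * (c * (⟪x, T x⟫_ℂ / ‖x‖ ^ 2)) := by
    push_cast; field_simp
  rw [hscale, re_ofReal_mul]
  exact mul_pos (by positivity) (hc _ hmem)

end NumericalRange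

lemma IsSectorial.zero_notMem_numericalRange {A : Matrix (Fin n) (Fin n) ℂ}
    (hA : IsSectorial A) : 0 ∉ numericalRange A.toEuclideanLin := by
  rintro ⟨x, hx, h0⟩
  have hx : ‖x‖ = 1 := by simpa using hx
  refine hA x.ofLp ?_ ?_
  · rw [dotProduct_comm, ← EuclideanSpace.inner_eq_star_dotProduct, inner_self_eq_norm_sq_to_K, hx]
    simp
  · rw [dotProduct_comm]
    simpa only [EuclideanSpace.inner_eq_star_dotProduct, ofLp_toLpLin, toLin'_apply] using h0

lemma IsSectorial.exists_forall_re_mul_pos {A : Matrix (Fin n) (Fin n) ℂ} (hA : IsSectorial A) :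
    ∃ c : ℂ, ∀ x ≠ 0, 0 < (c * (star x ⬝ᵥ A *ᵥ x)).re := by
  obtain ⟨c, hc⟩ := exists_forall_re_mul_inner_pos hA.zero_notMem_numericalRange
  refine ⟨c, fun x hx => ?_⟩
  simpa only [EuclideanSpace.inner_eq_star_dotProduct, ofLp_toLpLin, toLin'_apply,
    dotProduct_comm] using hc (WithLp.toLp 2 x) (by simpa using hx)

open scoped MatrixOrder in
lemma exists_simultaneous_diagonalization {ι 𝕜 : Type*} [Fintype ι] [DecidableEq ι] [RCLike 𝕜]
    {H K : Matrix ι ι 𝕜} (hH : H.PosDef) (hK : K.IsHermitian) :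
    ∃ (S : Matrix ι ι 𝕜) (d : ι → ℝ), IsUnit S ∧ H = Sᴴ * S ∧
      K = Sᴴ * diagonal (RCLike.ofReal ∘ d) * S := by
  obtain ⟨P, hP, hHP⟩ :=
    CStarAlgebra.isStrictlyPositive_iff_eq_star_mul_self.mp hH.isStrictlyPositive
  have hPdet : IsUnit P.det := (isUnit_iff_isUnit_det P).mp hP
  obtain ⟨U, d, hUU, hspec⟩ : ∃ (U : Matrix ι ι 𝕜) (d : ι → ℝ),
      U * Uᴴ = 1 ∧ P⁻¹ᴴ * K * P⁻¹ = U * diagonal (RCLike.ofReal ∘ d) * Uᴴ :=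
    have hK' : (P⁻¹ᴴ * K * P⁻¹).IsHermitian := isHermitian_conjTranspose_mul_mul _ hK
    ⟨_, _, Unitary.coe_mul_star_self hK'.eigenvectorUnitary, hK'.spectral_theorem⟩
  refine ⟨Uᴴ * P, d, (IsUnit.of_mul_eq_one_right U hUU).mul hP, ?_, ?_⟩
  · rw [conjTranspose_mul, conjTranspose_conjTranspose, Matrix.mul_assoc, ← Matrix.mul_assoc U,
      hUU, Matrix.one_mul]
    exact hHP
  · calc K = (P⁻¹ * P)ᴴ * K * (P⁻¹ * P) := by rw [nonsing_inv_mul _ hPdet]; simp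
      _ = Pᴴ * (P⁻¹ᴴ * K * P⁻¹) * P := by simp only [conjTranspose_mul, Matrix.mul_assoc]
      _ = _ := by
        rw [hspec]
        simp only [conjTranspose_mul, conjTranspose_conjTranspose, Matrix.mul_assoc]

open scoped ComplexStarModule in
lemma posDef_realPart {ι : Type*} [Fintype ι] {A : Matrix ι ι ℂ}
    (hA : ∀ x ≠ 0, 0 < (star x ⬝ᵥ A *ᵥ x).re) : (ℜ A : Matrix ι ι ℂ).PosDef := by
  refine .of_dotProduct_mulVec_pos (ℜ A).2 fun x hx => ?_
  have hconj : star x ⬝ᵥ Aᴴ *ᵥ x = star (star x ⬝ᵥ A *ᵥ x) := by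
    rw [dotProduct_mulVec, ← star_mulVec, star_dotProduct, ← dotProduct_comm]
  have hre : star x ⬝ᵥ (ℜ A : Matrix ι ι ℂ) *ᵥ x = ((star x ⬝ᵥ A *ᵥ x).re : ℂ) := by
    rw [realPart_apply_coe, star_eq_conjTranspose, smul_mulVec, add_mulVec, dotProduct_smul,
      dotProduct_add, hconj, Complex.re_eq_add_conj, Complex.real_smul, RCLike.star_def]
    push_cast
    ring
  rw [hre]
  exact mod_cast hA x hx

lemma isSectorialDecomp_conjTranspose_mul_diagonal_mul {S : Matrix (Fin n) (Fin n) ℂ}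
    (hS : IsUnit S) {v : Fin n → ℂ} (hv : ∀ k, v k ≠ 0) :
    IsSectorialDecomp (Sᴴ * diagonal v * S) (diagonal (fun k => (√‖v k‖ : ℂ)) * S)
      (fun k => (v k).arg) := by
  refine ⟨IsUnit.mul ?_ hS, ?_⟩
  · simpa [Matrix.isUnit_diagonal, Pi.isUnit_iff, Real.sqrt_eq_zero'] using hv
  · have hdiag : diagonal v = (diagonal fun k => (√‖v k‖ : ℂ)) * phaseDiag (fun k => (v k).arg) *
        diagonal fun k => (√‖v k‖ : ℂ) := by
      rw [phaseDiag, diagonal_mul_diagonal, diagonal_mul_diagonal]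
      congr 1 with k
      have hsqrt : (√‖v k‖ : ℂ) * √‖v k‖ = ‖v k‖ := mod_cast Real.mul_self_sqrt (norm_nonneg _)
      rw [mul_right_comm, hsqrt, mul_comm Complex.I, Complex.norm_mul_exp_arg_mul_I]
    rw [hdiag, conjTranspose_mul, diagonal_conjTranspose]
    simp only [Pi.star_def, RCLike.star_def, Complex.conj_ofReal, Matrix.mul_assoc]

open scoped ComplexStarModule in
lemma exists_isSectorialDecomp_of_re_pos {A : Matrix (Fin n) (Fin n) ℂ}
    (hA : ∀ x ≠ 0, 0 < (star x ⬝ᵥ A *ᵥ x).re) :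
    ∃ T φ, IsSectorialDecomp A T φ ∧ ∀ k, |φ k| < Real.pi / 2 := by
  obtain ⟨S, d, hS, hre, him⟩ :=
    exists_simultaneous_diagonalization (posDef_realPart hA) (ℑ A).2
  have hA_eq : A = Sᴴ * diagonal (fun k => 1 + Complex.I * (d k : ℂ)) * S := by
    have hdiag : diagonal (fun k => 1 + Complex.I * (d k : ℂ)) =
        1 + Complex.I • diagonal (RCLike.ofReal ∘ d) := by
      rw [← diagonal_one, ← diagonal_smul, diagonal_add]; rfl
    conv_lhs => rw [← realPart_add_I_smul_imaginaryPart A, hre, him]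
    rw [hdiag, Matrix.mul_add, Matrix.add_mul, Matrix.mul_one, Matrix.mul_smul, Matrix.smul_mul]
  have hpos (k : Fin n) : 0 < (1 + Complex.I * (d k : ℂ)).re := by simp
  have hne (k : Fin n) : 1 + Complex.I * (d k : ℂ) ≠ 0 := fun h => by simpa [h] using hpos k
  exact ⟨_, _, hA_eq ▸ isSectorialDecomp_conjTranspose_mul_diagonal_mul hS hne,
    fun k => Complex.abs_arg_lt_pi_div_two_iff.mpr (.inl (hpos k))⟩

namespace IsSectorialDecomp

variable {A T : Matrix (Fin n) (Fin n) ℂ} {φ : Fin n → ℝ}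

lemma smul (h : IsSectorialDecomp A T φ) {c : ℂ} (hc : c ≠ 0) :
    IsSectorialDecomp (c • A) ((√‖c‖ : ℂ) • T) (fun k => φ k + c.arg) := by
  have hsqrt : (√‖c‖ : ℂ) * √‖c‖ = ‖c‖ := mod_cast Real.mul_self_sqrt (norm_nonneg _)
  have hsqrt0 : (√‖c‖ : ℂ) ≠ 0 := by simpa [Real.sqrt_eq_zero'] using hc
  refine ⟨h.1.smul (Units.mk0 _ hsqrt0), ?_⟩
  have hdiag : (‖c‖ : ℂ) • phaseDiag (fun k => φ k + c.arg) = c • phaseDiag φ := by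
    rw [phaseDiag, phaseDiag, ← diagonal_smul, ← diagonal_smul]
    congr 1 with k
    simp only [Pi.smul_apply, smul_eq_mul, Complex.ofReal_add, mul_add, Complex.exp_add]
    rw [mul_comm Complex.I (c.arg : ℂ)]
    linear_combination
      Complex.exp (Complex.I * (φ k : ℂ)) * Complex.norm_mul_exp_arg_mul_I c
  rw [conjTranspose_smul, RCLike.star_def, Complex.conj_ofReal, Matrix.smul_mul, Matrix.smul_mul,
    Matrix.mul_smul, smul_smul, hsqrt, ← Matrix.smul_mul, ← Matrix.mul_smul, hdiag, h.2,
    Matrix.mul_smul, Matrix.smul_mul]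

lemma comp_perm (h : IsSectorialDecomp A T φ) (σ : Equiv.Perm (Fin n)) :
    IsSectorialDecomp A (T.submatrix σ id) (φ ∘ σ) := by
  refine ⟨(isUnit_submatrix_equiv (e₁ := σ) (e₂ := Equiv.refl _)).mpr h.1, ?_⟩
  have hdiag : phaseDiag (φ ∘ σ) = (phaseDiag φ).submatrix σ σ :=
    (submatrix_diagonal_equiv (fun k => Complex.exp (Complex.I * (φ k : ℂ))) σ).symm
  rw [hdiag, conjTranspose_submatrix, submatrix_mul_equiv, submatrix_mul_equiv, submatrix_id_id]
  exact h.2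

lemma add_int_mul_two_pi (h : IsSectorialDecomp A T φ) (N : ℤ) :
    IsSectorialDecomp A T (fun k => φ k + N * (2 * Real.pi)) := by
  have hdiag : phaseDiag (fun k => φ k + N * (2 * Real.pi)) = phaseDiag φ := by
    rw [phaseDiag, phaseDiag]
    congr 1 with k
    exact Complex.exp_eq_exp_iff_exists_int.mpr ⟨N, by push_cast; ring⟩
  exact ⟨h.1, hdiag ▸ h.2⟩

lemma exists_isCanonicalPhases [Nonempty (Fin n)] (h : IsSectorialDecomp A T φ)
    (hφ : ∀ i j, φ i - φ j < Real.pi) : ∃ ψ, IsCanonicalPhases A ψ := by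
  obtain ⟨σ, hσ⟩ : ∃ σ : Equiv.Perm (Fin n), Antitone (φ ∘ σ) :=
    ⟨_, fun _ _ hij => neg_le_neg_iff.mp (Tuple.monotone_sort (-φ) hij)⟩
  obtain ⟨N, ⟨hlo, hhi⟩, -⟩ :=
    existsUnique_add_zsmul_mem_Ioc Real.two_pi_pos (((⨆ i, φ i) + ⨅ i, φ i) / 2) (-Real.pi)
  rw [zsmul_eq_mul] at hlo hhi
  have hsup : ⨆ i, ((φ ∘ σ) i + N * (2 * Real.pi)) = (⨆ i, φ i) + N * (2 * Real.pi) := by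
    rw [← ciSup_add (Set.finite_range _).bddAbove]
    exact congrArg (· + _) (σ.iSup_comp (g := φ))
  have hinf : ⨅ i, ((φ ∘ σ) i + N * (2 * Real.pi)) = (⨅ i, φ i) + N * (2 * Real.pi) := by
    rw [← ciInf_add (Set.finite_range _).bddBelow]
    exact congrArg (· + _) (σ.iInf_comp (g := φ))
  refine ⟨fun k => (φ ∘ σ) k + N * (2 * Real.pi), fun i j hij => by simpa using hσ hij,
    fun i j => by simpa using hφ (σ i) (σ j), ?_, ?_, _,
    (h.comp_perm σ).add_int_mul_two_pi N⟩ <;> rw [hsup, hinf] <;> linarith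

end IsSectorialDecomp

lemma IsSectorial.exists_isCanonicalPhases {A : Matrix (Fin n) (Fin n) ℂ} (hA : IsSectorial A) :
    ∃ φ, IsCanonicalPhases A φ := by
  obtain hn | hn := isEmpty_or_nonempty (Fin n)
  · exact ⟨0, Subsingleton.antitone 0, isEmptyElim, by simp [Real.pi_pos], by simp [Real.pi_nonneg],
      1, isUnit_one, Subsingleton.elim _ _⟩
  obtain ⟨c, hc⟩ := hA.exists_forall_re_mul_pos
  have hc0 : c ≠ 0 := by
    rintro rfl
    obtain ⟨x, hx⟩ := exists_ne (0 : Fin n → ℂ)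
    simpa using hc x hx
  obtain ⟨T, φ, h, hφ⟩ := exists_isSectorialDecomp_of_re_pos (A := c • A)
    (by simpa only [smul_mulVec, dotProduct_smul, smul_eq_mul] using hc)
  have hrot := h.smul (inv_ne_zero hc0)
  rw [inv_smul_smul₀ hc0] at hrot
  refine hrot.exists_isCanonicalPhases fun i j => ?_
  linarith [abs_lt.mp (hφ i), abs_lt.mp (hφ j)]

lemma IsSectorial.isCanonicalPhases_phases {A : Matrix (Fin n) (Fin n) ℂ} (hA : IsSectorial A) :
    IsCanonicalPhases A (phases A) := by
  have h := hA.exists_isCanonicalPhases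
  rw [phases, dif_pos h]
  exact h.choose_spec

namespace IsSectorialDecomp

variable {A T : Matrix (Fin n) (Fin n) ℂ} {φ : Fin n → ℝ}

lemma isUnit (h : IsSectorialDecomp A T φ) : IsUnit A := by
  have hdiag : IsUnit (phaseDiag φ) := by
    simp [phaseDiag, isUnit_diagonal, Pi.isUnit_iff]
  rw [h.2]
  exact (h.1.star.mul hdiag).mul h.1

lemma rank_sub_conjTranspose_le (h : IsSectorialDecomp A T φ) :
    (A - Aᴴ).rank ≤ {k | φ k ≠ 0}.ncard := by
  have hdiff : A - Aᴴ = Tᴴ * (phaseDiag φ - (phaseDiag φ)ᴴ) * T := by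
    rw [h.2]
    simp only [conjTranspose_mul, conjTranspose_conjTranspose, Matrix.mul_sub, Matrix.sub_mul,
      Matrix.mul_assoc]
  calc (A - Aᴴ).rank ≤ (phaseDiag φ - (phaseDiag φ)ᴴ).rank := by
        rw [hdiff]
        exact (rank_mul_le_left _ _).trans (rank_mul_le_right _ _)
    _ ≤ {k | φ k ≠ 0}.ncard := by
        rw [phaseDiag, diagonal_conjTranspose, diagonal_sub, rank_diagonal,
          ← Nat.card_eq_fintype_card]
        refine Set.ncard_le_ncard (fun k hk hφ => hk ?_)
        simp [hφ]

lemma dotProduct_mulVec (h : IsSectorialDecomp A T φ) (x : Fin n → ℂ) :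
    star x ⬝ᵥ A *ᵥ x = ∑ k, Complex.exp (Complex.I * (φ k : ℂ)) * ‖(T *ᵥ x) k‖ ^ 2 := by
  have hform : star x ⬝ᵥ A *ᵥ x = star (T *ᵥ x) ⬝ᵥ phaseDiag φ *ᵥ (T *ᵥ x) := by
    rw [h.2, star_mulVec, ← Matrix.dotProduct_mulVec, mulVec_mulVec, mulVec_mulVec,
      Matrix.mul_assoc]
  rw [hform, dotProduct]
  refine Finset.sum_congr rfl fun k _ => ?_
  rw [phaseDiag, mulVec_diagonal, Pi.star_apply, ← Complex.conj_mul', RCLike.star_def]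
  ring

lemma im_exp_mul_dotProduct_mulVec (h : IsSectorialDecomp A T φ) (θ : ℝ) (x : Fin n → ℂ) :
    (Complex.exp (-(Complex.I * θ)) * (star x ⬝ᵥ A *ᵥ x)).im =
      ∑ k, Real.sin (φ k - θ) * ‖(T *ᵥ x) k‖ ^ 2 := by
  rw [h.dotProduct_mulVec, Finset.mul_sum, Complex.im_sum]
  refine Finset.sum_congr rfl fun k _ => ?_
  have hexp : Complex.exp (-(Complex.I * θ)) * Complex.exp (Complex.I * φ k) =
      Complex.exp ((φ k - θ : ℝ) * Complex.I) := by
    rw [← Complex.exp_add]; push_cast; ring_nf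
  rw [← mul_assoc, hexp, ← Complex.ofReal_pow, Complex.im_mul_ofReal, Complex.exp_ofReal_mul_I_im]

lemma im_exp_mul_dotProduct_mulVec_nonpos (h : IsSectorialDecomp A T φ) {θ : ℝ} {x : Fin n → ℂ}
    (hx : ∀ k, (T *ᵥ x) k ≠ 0 → φ k ∈ Set.Icc (θ - Real.pi) θ) :
    (Complex.exp (-(Complex.I * θ)) * (star x ⬝ᵥ A *ᵥ x)).im ≤ 0 := by
  rw [h.im_exp_mul_dotProduct_mulVec]
  refine Finset.sum_nonpos fun k _ => ?_
  by_cases hk : (T *ᵥ x) k = 0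
  · simp [hk]
  · obtain ⟨hlo, hhi⟩ := hx k hk
    exact mul_nonpos_of_nonpos_of_nonneg
      (Real.sin_nonpos_of_nonpos_of_neg_pi_le (by linarith) (by linarith)) (sq_nonneg _)

lemma im_exp_mul_dotProduct_mulVec_pos (h : IsSectorialDecomp A T φ) {θ : ℝ} {x : Fin n → ℂ}
    (hx0 : x ≠ 0) (hx : ∀ k, (T *ᵥ x) k ≠ 0 → φ k ∈ Set.Ioo θ (θ + Real.pi)) :
    0 < (Complex.exp (-(Complex.I * θ)) * (star x ⬝ᵥ A *ᵥ x)).im := by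
  have hterm {k : Fin n} (hk : (T *ᵥ x) k ≠ 0) : 0 < Real.sin (φ k - θ) * ‖(T *ᵥ x) k‖ ^ 2 :=
    mul_pos (Real.sin_pos_of_pos_of_lt_pi (by linarith [(hx k hk).1]) (by linarith [(hx k hk).2]))
      (by positivity)
  obtain ⟨l, hl⟩ : ∃ l, (T *ᵥ x) l ≠ 0 := Function.ne_iff.mp fun hTx =>
    hx0 (mulVec_injective_iff_isUnit.mpr h.1 (hTx.trans (mulVec_zero T).symm))
  rw [h.im_exp_mul_dotProduct_mulVec]
  refine Finset.sum_pos' (fun k _ => ?_) ⟨l, Finset.mem_univ l, hterm hl⟩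
  by_cases hk : (T *ᵥ x) k = 0
  · simp [hk]
  · exact (hterm hk).le

end IsSectorialDecomp

lemma exists_ne_zero_forall_apply_eq_zero {K V ι : Type*} [Field K] [AddCommGroup V] [Module K V]
    [Fintype ι] (f : ι → V →ₗ[K] K) (hf : Fintype.card ι < Module.finrank K V) :
    ∃ x ≠ 0, ∀ i, f i x = 0 := by
  have : FiniteDimensional K V := Module.finite_of_finrank_pos (by lia)
  have hker : LinearMap.ker (LinearMap.pi f) ≠ ⊥ :=
    LinearMap.ker_ne_bot_of_finrank_lt (by rwa [Module.finrank_fintype_fun_eq_card])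
  obtain ⟨x, hx, hx0⟩ := (Submodule.ne_bot_iff _).mp hker
  exact ⟨x, hx0, fun i => congrFun hx i⟩

namespace IsCanonicalPhases

variable {p r : ℕ} {A : Matrix (Fin n) (Fin n) ℂ} {B : Matrix (Fin p) (Fin p) ℂ}
  {φ : Fin n → ℝ} {ψ : Fin p → ℝ}

/-- A form of Cauchy interlacing for canonical phases. -/
theorem le_of_forall_mem_dotProduct_eq (hA : IsCanonicalPhases A φ) (hB : IsCanonicalPhases B ψ)
    (hπ : ∀ i j, φ i - ψ j < Real.pi) {V : Submodule ℂ (Fin n → ℂ)}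
    (hV : n ≤ Module.finrank ℂ V + r) (L : (Fin n → ℂ) →ₗ[ℂ] (Fin p → ℂ))
    (hL : ∀ x ∈ V, star (L x) ⬝ᵥ B *ᵥ L x = star x ⬝ᵥ A *ᵥ x) {i : Fin n} {j : Fin p}
    (hij : (j : ℕ) + r ≤ i) : φ i ≤ ψ j := by
  obtain ⟨hφ, -, -, -, S, hS⟩ := hA
  obtain ⟨hψ, hψπ, -, -, T, hT⟩ := hB
  by_contra! hlt
  obtain ⟨x, hx0, hSx, hTx⟩ : ∃ x : V, x ≠ 0 ∧ (∀ k, i < k → (S *ᵥ (x : Fin n → ℂ)) k = 0) ∧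
      ∀ k, k < j → (T *ᵥ L x) k = 0 := by
    let f : Finset.Ioi i ⊕ Finset.Iio j → V →ₗ[ℂ] ℂ := Sum.elim
      (fun k => (LinearMap.proj k.1 ∘ₗ S.mulVecLin).domRestrict V)
      (fun k => (LinearMap.proj k.1 ∘ₗ T.mulVecLin ∘ₗ L).domRestrict V)
    obtain ⟨x, hx0, hx⟩ := exists_ne_zero_forall_apply_eq_zero f (by
      rw [Fintype.card_sum, Fintype.card_coe, Fintype.card_coe, Fin.card_Ioi, Fin.card_Iio]
      lia)
    exact ⟨x, hx0, fun k hk => hx (.inl ⟨k, Finset.mem_Ioi.mpr hk⟩),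
      fun k hk => hx (.inr ⟨k, Finset.mem_Iio.mpr hk⟩)⟩
  have hle := hT.im_exp_mul_dotProduct_mulVec_nonpos (θ := ψ j) (x := L x) fun k hk =>
    ⟨by linarith [hψπ j k], hψ (le_of_not_gt fun hkj => hk (hTx k hkj))⟩
  have hpos := hS.im_exp_mul_dotProduct_mulVec_pos (θ := ψ j) (x := x.1) (by simpa using hx0)
    fun k hk => ⟨hlt.trans_le (hφ (le_of_not_gt fun hik => hk (hSx k hik))), by linarith [hπ k j]⟩
  rw [hL x x.2] at hle
  exact hpos.not_ge hle

end IsCanonicalPhases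

lemma dotProduct_inv_mul_mul_inv_mulVec {ι : Type*} [Fintype ι] [DecidableEq ι]
    {A E : Matrix ι ι ℂ} (hE : IsUnit E) {x : ι → ℂ} (hx : Eᴴ *ᵥ x = E *ᵥ x) :
    star (E *ᵥ x) ⬝ᵥ (E⁻¹ * A * E⁻¹) *ᵥ (E *ᵥ x) = star x ⬝ᵥ A *ᵥ x := by
  have hdet : IsUnit E.det := (isUnit_iff_isUnit_det E).mp hE
  rw [← hx, star_mulVec, conjTranspose_conjTranspose, ← dotProduct_mulVec, hx, mulVec_mulVec,
    mulVec_mulVec, ← Matrix.mul_assoc, ← Matrix.mul_assoc, mul_nonsing_inv _ hdet, Matrix.one_mul,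
    Matrix.mul_assoc, nonsing_inv_mul _ hdet, Matrix.mul_one]

theorem phases_le_phases_inv_mul_mul_inv {A E : Matrix (Fin n) (Fin n) ℂ} {r : ℕ}
    (hA : IsSectorial A) (hE : IsUnit E) (hr : (E - Eᴴ).rank ≤ r)
    (hB : IsSectorial (E⁻¹ * A * E⁻¹))
    (hπ : ∀ i j, phases A i - phases (E⁻¹ * A * E⁻¹) j < Real.pi) {i j : Fin n}
    (hij : (j : ℕ) + r ≤ i) : phases A i ≤ phases (E⁻¹ * A * E⁻¹) j := by
  refine hA.isCanonicalPhases_phases.le_of_forall_mem_dotProduct_eq hB.isCanonicalPhases_phases hπ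
    (V := LinearMap.ker (E - Eᴴ).mulVecLin) ?_ E.mulVecLin (fun x hx => ?_) hij
  · have hdim := (E - Eᴴ).mulVecLin.finrank_range_add_finrank_ker
    rw [Module.finrank_fin_fun] at hdim
    rw [Matrix.rank] at hr
    lia
  · rw [LinearMap.mem_ker, mulVecLin_apply, sub_mulVec, sub_eq_zero] at hx
    exact dotProduct_inv_mul_mul_inv_mulVec hE hx.symm

lemma sum_filter_shift_le_sum_filter {M : Type*} [AddCommMonoid M] [PartialOrder M]
    [IsOrderedAddMonoid M] {f g : Fin n → M} {r : ℕ}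
    (hg : ∀ k, 0 ≤ g k) (hfg : ∀ i j : Fin n, (j : ℕ) + r = i → f i ≤ g j) (m : ℕ) :
    ∑ k : Fin n with r ≤ k.val ∧ k.val < r + m, f k ≤ ∑ k : Fin n with k.val < m, g k := by
  let shift (k : Fin n) : Fin n := ⟨k - r, by lia⟩
  calc ∑ k : Fin n with r ≤ k.val ∧ k.val < r + m, f k
      ≤ ∑ k : Fin n with r ≤ k.val ∧ k.val < r + m, g (shift k) :=
        Finset.sum_le_sum fun k hk =>
          hfg _ _ (Nat.sub_add_cancel (Finset.mem_filter.mp hk).2.1)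
    _ = ∑ j ∈ (Finset.univ.filter fun k : Fin n =>
          r ≤ k.val ∧ k.val < r + m).image shift, g j := by
        refine (Finset.sum_image fun a ha b hb hab => ?_).symm
        simp only [Finset.coe_filter, Finset.mem_univ, true_and, Set.mem_ofPred_eq] at ha hb
        have := Fin.mk.inj_iff.mp hab
        lia
    _ ≤ ∑ k : Fin n with k.val < m, g k := by
        refine Finset.sum_le_sum_of_subset_of_nonneg
          (Finset.image_subset_iff.mpr fun k hk => ?_) fun k _ _ => hg k
        simp only [Finset.mem_filter, Finset.mem_univ, true_and, shift] at hk ⊢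
        lia

theorem sum_largest_phases_lower_bound_general {A E : Matrix (Fin n) (Fin n) ℂ} {r : ℕ}
    (hA : IsSectorial A) (hA_lt : ∀ k, phases A k < Real.pi)
    (hE : IsUnit E) (hr : (E - Eᴴ).rank ≤ r)
    (hB : IsSectorial (E⁻¹ * A * E⁻¹)) (hB_nonneg : ∀ k, 0 ≤ phases (E⁻¹ * A * E⁻¹) k) (m : ℕ) :
    ∑ k : Fin n with r ≤ k.val ∧ k.val < r + m, phases A k ≤
      ∑ k : Fin n with k.val < m, phases (E⁻¹ * A * E⁻¹) k :=
  sum_filter_shift_le_sum_filter hB_nonneg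
    (fun _ _ hij => phases_le_phases_inv_mul_mul_inv hA hE hr hB
      (fun i j => by linarith [hA_lt i, hB_nonneg j]) hij.le) m

/-- lower bound on the sum of the `m` largest phases of `E⁻¹AE⁻¹`. -/
theorem sum_largest_phases_lower_bound
    (hn : 1 ≤ n) (A : Matrix (Fin n) (Fin n) ℂ) (hA : PositiveImaginary A)
    (r : ℕ) (hr : r ≤ n)
    (E : Matrix (Fin n) (Fin n) ℂ) (hE : IsSectorial E) (hpr : prank E ≤ r)
    (hEA : PositiveImaginary (E⁻¹ * A * E⁻¹)) :
    ∀ m : ℕ, 1 ≤ m → m ≤ n →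
      (∑ k ∈ Finset.univ.filter (fun k : Fin n => r ≤ (k : ℕ) ∧ (k : ℕ) < r + m), phases A k) ≤
        ∑ k ∈ Finset.univ.filter (fun k : Fin n => (k : ℕ) < m), phases (E⁻¹ * A * E⁻¹) k := by
  obtain ⟨-, -, -, -, T, hT⟩ := hE.isCanonicalPhases_phases
  exact fun m _ _ => sum_largest_phases_lower_bound_general hA.1 (fun k => (hA.2 k).2) hT.isUnit
    (hT.rank_sub_conjTranspose_le.trans hpr) hEA.1 (fun k => (hEA.2 k).1) m

end LowPrank
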